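/- Lemma 4.2, case $(2,2,n)$ with $n$ even (spin component): Let $n\ge2$ be even. If the nonzero complex parameters satisfy $t_{12,1}t_{12,2}t_{23,1}t_{23,2}=t_{13,i}\,t_{13,n+1-i}$ for all integers $1\le i\le n/2$, then $\dim_{\mathbb{C}}A_+(2,2,n;t)=2n$, i.e., the algebra $A_{u+}$ is flat at these parameters. -/

import Mathlib

/-!
Write `s, p` for the trace and determinant of the quadratic relation for `a`, so `a² = s a - p`, and
`u, v` for those of `b`. Already in the algebra with these two relations only, the element
`z = ab + (u - b)(s - a)` is central, and `x = ab` satisfies `x² - z x + p v = 0`; moreover `x` is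
invertible because `p v ≠ 0`. If `t t' = p v`, then `(x - t)(x - t') = (z - (t + t')) x`, so pairing
the factors `i` and `n + 1 - i` turns the relation for `ab` into `Q(z) x^(n/2) = 0`, i.e. `Q(z) = 0`,
where `Q` is monic of degree `n / 2` (`aeval_pairedProd`).

Put `R = ℂ[X]/(Q)`. The products `1, a, b, ab` span the algebra over `ℂ[z]` (`exists_normalForm`),
and left multiplication on this would-be basis gives explicit matrices `matA, matB` over `R`
satisfying all the relations. Applying the resulting representation to the first basis vector
recovers the coordinates modulo `Q`, so the algebra is isomorphic to `R⁴` as a vector space and has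
dimension `4 · (n / 2) = 2 n`.
-/

/-!
Lemma 4.1, case `(2,2,n)` with `n` even. We define `A_+(p,q,r;t)` as the quotient of the free
unital associative `ℂ`-algebra on two generators `a, b` by the two-sided ideal generated by
`∏_{k=1}^{p} (a - t₁₂ₖ)`, `∏_{k=1}^{q} (b - t₂₃ₖ)` and `∏_{k=1}^{r} (ab - t₁₃ₖ)`.
Flatness at these parameters means `dim_ℂ A_+(2,2,n;t) = 2n`.
-/

noncomputable section

open Polynomial

namespace Rank3

/-- The generator `a`. -/
def a : FreeAlgebra ℂ (Fin 2) := FreeAlgebra.ι ℂ 0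

/-- The generator `b`. -/
def b : FreeAlgebra ℂ (Fin 2) := FreeAlgebra.ι ℂ 1

/-- The relations of `A_+(p,q,r;t)`: the minimal polynomial relations for `a`, `b` and `ab`. -/
inductive Rel (p q r : ℕ) (t12 t23 t13 : ℕ → ℂ) :
    FreeAlgebra ℂ (Fin 2) → FreeAlgebra ℂ (Fin 2) → Prop
  | ra : Rel p q r t12 t23 t13
      (aeval a (∏ k ∈ Finset.Icc 1 p, (X - C (t12 k)))) 0
  | rb : Rel p q r t12 t23 t13
      (aeval b (∏ k ∈ Finset.Icc 1 q, (X - C (t23 k)))) 0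
  | rab : Rel p q r t12 t23 t13
      (aeval (a * b) (∏ k ∈ Finset.Icc 1 r, (X - C (t13 k)))) 0

/-- The algebra `A_+(p,q,r;t)`. -/
abbrev Aplus (p q r : ℕ) (t12 t23 t13 : ℕ → ℂ) : Type :=
  RingQuot (Rel p q r t12 t23 t13)

end Rank3

namespace Rank3

/-! ### Two quadratic elements and their central element -/

section Quadratic

variable {A : Type*} [Ring A] [Algebra ℂ A]

/-- The element `xy + (u - y)(s - x)`. It commutes with `x` once `x² = s x - p` and with `y` once
`y² = u y - v`. -/
def centralElt (x y : A) (s u : ℂ) : A := x * y + (u • 1 - y) * (s • 1 - x)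

variable {x y : A} {s p u v : ℂ}

lemma centralElt_eq : centralElt x y s u = x * y + y * x - u • x - s • y + (u * s) • 1 := by
  simp only [centralElt, mul_sub, sub_mul, smul_mul_assoc, mul_smul_comm, one_mul, mul_one]
  module

lemma mul_swap : y * x = centralElt x y s u - x * y + u • x + s • y - (u * s) • 1 := by
  rw [centralElt_eq]; abel

lemma centralElt_commute_left (hx : x * x = s • x - p • 1) : Commute (centralElt x y s u) x := by
  have h1 : x * x * y = s • (x * y) - p • y := by rw [hx]; simp [sub_mul]
  have h2 : y * x * x = s • (y * x) - p • y := by rw [mul_assoc, hx]; simp [mul_sub]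
  simp only [Commute, SemiconjBy, centralElt_eq, mul_add, add_mul, mul_sub, sub_mul, smul_mul_assoc,
    mul_smul_comm, one_mul, mul_one, ← mul_assoc, h1, h2]
  module

lemma centralElt_commute_right (hy : y * y = u • y - v • 1) : Commute (centralElt x y s u) y := by
  have h1 : y * y * x = u • (y * x) - v • x := by rw [hy]; simp [sub_mul]
  have h2 : x * y * y = u • (x * y) - v • x := by rw [mul_assoc, hy]; simp [mul_sub]
  simp only [Commute, SemiconjBy, centralElt_eq, mul_add, add_mul, mul_sub, sub_mul, smul_mul_assoc,
    mul_smul_comm, one_mul, mul_one, ← mul_assoc, h1, h2]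
  module

lemma mul_conj (hx : x * x = s • x - p • 1) (hy : y * y = u • y - v • 1) :
    x * y * ((u • 1 - y) * (s • 1 - x)) = (p * v) • 1 := by
  have h1 : y * (u • 1 - y) = v • 1 := by simp [mul_sub, hy]
  have h2 : x * (s • 1 - x) = p • 1 := by simp [mul_sub, hx]
  calc x * y * ((u • 1 - y) * (s • 1 - x)) = x * (y * (u • 1 - y)) * (s • 1 - x) := by
        simp only [mul_assoc]
    _ = _ := by rw [h1, mul_smul_comm, mul_one, smul_mul_assoc, h2, smul_smul, mul_comm]

lemma conj_mul (hx : x * x = s • x - p • 1) (hy : y * y = u • y - v • 1) :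
    (u • 1 - y) * (s • 1 - x) * (x * y) = (p * v) • 1 := by
  have h1 : (u • 1 - y) * y = v • 1 := by simp [sub_mul, hy]
  have h2 : (s • 1 - x) * x = p • 1 := by simp [sub_mul, hx]
  calc (u • 1 - y) * (s • 1 - x) * (x * y) = (u • 1 - y) * ((s • 1 - x) * x) * y := by
        simp only [mul_assoc]
    _ = _ := by rw [h2, mul_smul_comm, mul_one, smul_mul_assoc, h1, smul_smul]

/-- The Cayley–Hamilton relation for `x y`, with trace `centralElt x y s u` and determinant `p v`. -/
lemma sq_mul (hx : x * x = s • x - p • 1) (hy : y * y = u • y - v • 1) :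
    (x * y) * (x * y) = centralElt x y s u * (x * y) - (p * v) • 1 := by
  rw [centralElt, add_mul, conj_mul hx hy]; abel

/-- The inverse of `x y` is a scalar multiple of the conjugate product `(u - y)(s - x)`. -/
lemma isUnit_mul (hx : x * x = s • x - p • 1) (hy : y * y = u • y - v • 1) (hpv : p * v ≠ 0) :
    IsUnit (x * y) := by
  refine ⟨⟨x * y, (p * v)⁻¹ • ((u • 1 - y) * (s • 1 - x)), ?_, ?_⟩, rfl⟩
  · rw [mul_smul_comm, mul_conj hx hy, smul_smul, inv_mul_cancel₀ hpv, one_smul]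
  · rw [smul_mul_assoc, conj_mul hx hy, smul_smul, inv_mul_cancel₀ hpv, one_smul]

end Quadratic

/-! ### Pairing the factors of the relation for the product -/

/-- The monic polynomial `Q` of degree `m` whose roots are the sums `t i + t (2 m + 1 - i)`. -/
def pairedPoly (m : ℕ) (t : ℕ → ℂ) : ℂ[X] :=
  ∏ i ∈ Finset.Icc 1 m, (X - C (t i + t (2 * m + 1 - i)))

lemma pairedPoly_monic (m : ℕ) (t : ℕ → ℂ) : (pairedPoly m t).Monic :=
  monic_prod_of_monic _ _ fun _ _ => monic_X_sub_C _

lemma pairedPoly_natDegree (m : ℕ) (t : ℕ → ℂ) : (pairedPoly m t).natDegree = m := by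
  rw [pairedPoly, natDegree_prod_of_monic _ _ fun _ _ => monic_X_sub_C _]
  simp only [natDegree_X_sub_C]
  simp

lemma prod_pair (m : ℕ) (f : ℕ → ℂ[X]) :
    ∏ i ∈ Finset.Icc 1 (2 * m), f i = ∏ i ∈ Finset.Icc 1 m, (f i * f (2 * m + 1 - i)) := by
  have hd : Disjoint (Finset.Icc 1 m) (Finset.Icc (m + 1) (2 * m)) := by
    rw [Finset.disjoint_left]; intro i; simp only [Finset.mem_Icc]; omega
  have hu : Finset.Icc 1 (2 * m) = Finset.Icc 1 m ∪ Finset.Icc (m + 1) (2 * m) := by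
    ext i; simp only [Finset.mem_Icc, Finset.mem_union]; omega
  rw [hu, Finset.prod_union hd, Finset.prod_mul_distrib]
  congr 1
  refine Finset.prod_bij' (fun i _ => 2 * m + 1 - i) (fun i _ => 2 * m + 1 - i) ?_ ?_ ?_ ?_ ?_
  all_goals intro i hi; simp only [Finset.mem_Icc] at hi ⊢
  · omega
  · omega
  · omega
  · omega
  · congr 1; omega

lemma aeval_commute {A : Type*} [Ring A] [Algebra ℂ A] {z w : A} (h : Commute z w) (f : ℂ[X]) :
    Commute w (aeval z f) := by
  induction f using Polynomial.induction_on' with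
  | add f g hf hg => rw [map_add]; exact hf.add_right hg
  | monomial n c =>
    rw [aeval_monomial]
    exact (Algebra.commute_algebraMap_right c w).mul_right (h.symm.pow_right n)

/-- If `w² = z w - d` and the parameters pair up to products `d`, then the degree `2 m` relation
for `w` is `Q(z) w^m`. -/
lemma aeval_pairedProd {A : Type*} [Ring A] [Algebra ℂ A] {w z : A} {d : ℂ}
    (hzw : Commute z w) (hw : w * w = z * w - d • 1) (m : ℕ) (t : ℕ → ℂ)
    (ht : ∀ i, 1 ≤ i → i ≤ m → d = t i * t (2 * m + 1 - i)) :
    aeval w (∏ k ∈ Finset.Icc 1 (2 * m), (X - C (t k))) = aeval z (pairedPoly m t) * w ^ m := by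
  rw [prod_pair, pairedPoly]
  have key : ∀ S : Finset ℕ, S ⊆ Finset.Icc 1 m →
      aeval w (∏ i ∈ S, ((X - C (t i)) * (X - C (t (2 * m + 1 - i)))))
        = aeval z (∏ i ∈ S, (X - C (t i + t (2 * m + 1 - i)))) * w ^ S.card := by
    intro S
    induction S using Finset.induction_on with
    | empty => simp
    | insert i S hi ih =>
      intro hS
      have him := Finset.mem_Icc.1 (hS (Finset.mem_insert_self i S))
      have hd := ht i him.1 him.2
      have hq : aeval w ((X - C (t i)) * (X - C (t (2 * m + 1 - i))))
          = aeval z (X - C (t i + t (2 * m + 1 - i))) * w := by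
        simp only [map_mul, map_sub, aeval_X, aeval_C, map_add, Algebra.algebraMap_eq_smul_one,
          mul_sub, sub_mul, add_mul, smul_mul_assoc, mul_smul_comm, one_mul, mul_one, hw, hd]
        module
      have hc := aeval_commute hzw (∏ i ∈ S, (X - C (t i + t (2 * m + 1 - i))))
      rw [Finset.prod_insert hi, Finset.prod_insert hi, map_mul, hq,
        ih ((Finset.subset_insert i S).trans hS), map_mul, Finset.card_insert_of_notMem hi,
        pow_succ']
      simp only [mul_assoc]
      rw [← mul_assoc w, hc.eq, mul_assoc]
  simpa using key _ (Finset.Subset.refl _)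

/-! ### The regular representation -/

section Matrices

variable {R : Type*} [CommRing R] [Algebra ℂ R]

/-- Left multiplication by `a` in the basis `1, a, b, ab`; columns are the images of the basis
vectors, and `s, p` are the trace and determinant of `a`. -/
def matA (s p : R) : Matrix (Fin 4) (Fin 4) R :=
  !![0, -p, 0, 0; 1, s, 0, 0; 0, 0, 0, -p; 0, 0, 1, s]

/-- Left multiplication by `b` in the basis `1, a, b, ab`, where `z` is the central element. -/
def matB (s u v z : R) : Matrix (Fin 4) (Fin 4) R :=
  !![0, z - u * s, -v, -(s * v); 0, u, 0, v; 1, s, u, z; 0, -1, 0, 0]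

lemma matA_sq (s p : ℂ) :
    matA (algebraMap ℂ R s) (algebraMap ℂ R p) * matA (algebraMap ℂ R s) (algebraMap ℂ R p)
      = s • matA (algebraMap ℂ R s) (algebraMap ℂ R p) - p • 1 := by
  ext i j
  fin_cases i <;> fin_cases j <;>
    simp [matA, Matrix.mul_apply, Fin.sum_univ_four] <;>
    (try simp only [Algebra.smul_def]) <;> ring

lemma matB_sq (s u v : ℂ) (z : R) :
    matB (algebraMap ℂ R s) (algebraMap ℂ R u) (algebraMap ℂ R v) z *
        matB (algebraMap ℂ R s) (algebraMap ℂ R u) (algebraMap ℂ R v) z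
      = u • matB (algebraMap ℂ R s) (algebraMap ℂ R u) (algebraMap ℂ R v) z - v • 1 := by
  ext i j
  fin_cases i <;> fin_cases j <;>
    simp [matB, Matrix.mul_apply, Fin.sum_univ_four] <;>
    (try simp only [Algebra.smul_def]) <;> ring

lemma centralElt_mat (s p u v : ℂ) (z : R) :
    centralElt (matA (algebraMap ℂ R s) (algebraMap ℂ R p))
        (matB (algebraMap ℂ R s) (algebraMap ℂ R u) (algebraMap ℂ R v) z) s u
      = algebraMap R _ z := by
  rw [centralElt_eq]
  ext i j
  fin_cases i <;> fin_cases j <;>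
    simp [matA, matB, Matrix.algebraMap_matrix_apply] <;>
    (try simp only [Algebra.smul_def, map_mul]) <;> ring

end Matrices

/-! ### Normal forms -/

section NormalForm

variable {A : Type*} [Ring A] [Algebra ℂ A]

/-- The element `f₀(z) + f₁(z) x + f₂(z) y + f₃(z) x y`. -/
def normalForm (x y z : A) (f : Fin 4 → ℂ[X]) : A :=
  aeval z (f 0) + aeval z (f 1) * x + aeval z (f 2) * y + aeval z (f 3) * (x * y)

lemma normalForm_add (x y z : A) (f g : Fin 4 → ℂ[X]) :
    normalForm x y z (f + g) = normalForm x y z f + normalForm x y z g := by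
  simp only [normalForm, Pi.add_apply, map_add, add_mul]; abel

lemma normalForm_smul (x y z : A) (c : ℂ) (f : Fin 4 → ℂ[X]) :
    normalForm x y z (c • f) = c • normalForm x y z f := by
  simp only [normalForm, Pi.smul_apply, map_smul, smul_mul_assoc, smul_add]

variable {x y : A} {s p u v : ℂ}

lemma mul_normalForm_left (hx : x * x = s • x - p • 1) (f : Fin 4 → ℂ[X]) :
    x * normalForm x y (centralElt x y s u) f =
      normalForm x y (centralElt x y s u)
        ![-(p • f 1), f 0 + s • f 1, -(p • f 3), f 2 + s • f 3] := by
  have hc := fun g => (aeval_commute (centralElt_commute_left (y := y) (u := u) hx) g).eq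
  have hxxy : x * (x * y) = s • (x * y) - p • y := by rw [← mul_assoc, hx]; simp [sub_mul]
  simp only [normalForm, mul_add, ← mul_assoc x (aeval _ _), hc]
  simp only [mul_assoc, hx, hxxy, mul_sub, mul_smul_comm, mul_one]
  simp [add_mul]
  abel

lemma mul_normalForm_right (hy : y * y = u • y - v • 1)
    (f : Fin 4 → ℂ[X]) :
    y * normalForm x y (centralElt x y s u) f =
      normalForm x y (centralElt x y s u)
        ![f 1 * X - (u * s) • f 1 - v • f 2 - (s * v) • f 3, u • f 1 + v • f 3,
          f 0 + s • f 1 + u • f 2 + f 3 * X, -f 1] := by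
  have hc := fun g => (aeval_commute (centralElt_commute_right (x := x) (s := s) hy) g).eq
  have h1 : y * x = centralElt x y s u - x * y + u • x + s • y - (u * s) • 1 := mul_swap
  have h2 : y * (x * y) = centralElt x y s u * y + v • x - (s * v) • 1 := by
    rw [← mul_assoc, h1]
    simp only [add_mul, sub_mul, smul_mul_assoc, one_mul, mul_assoc, hy, mul_sub, mul_smul_comm,
      mul_one]
    module
  simp only [normalForm, mul_add, ← mul_assoc y (aeval _ _), hc]
  simp only [mul_assoc, h1, h2, hy, mul_sub, mul_add, mul_smul_comm, mul_one]
  simp [add_mul, mul_assoc]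
  module

/-- The span of `1, x, y, xy` over `ℂ[z]` contains `1` and is stable under left multiplication by
`x` and `y`, so it is the whole algebra when `x` and `y` generate. -/
lemma exists_normalForm (hx : x * x = s • x - p • 1) (hy : y * y = u • y - v • 1)
    (φ : FreeAlgebra ℂ (Fin 2) →ₐ[ℂ] A) (hφ : Function.Surjective φ)
    (hφx : φ a = x) (hφy : φ b = y) (g : A) :
    ∃ f, normalForm x y (centralElt x y s u) f = g := by
  have key : ∀ (w : FreeAlgebra ℂ (Fin 2)) (f : Fin 4 → ℂ[X]),
      ∃ f', normalForm x y (centralElt x y s u) f'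
        = φ w * normalForm x y (centralElt x y s u) f := by
    intro w
    induction w using FreeAlgebra.induction with
    | grade0 r =>
      intro f
      refine ⟨r • f, ?_⟩
      rw [normalForm_smul, AlgHom.commutes, Algebra.smul_def]
    | grade1 i =>
      intro f
      fin_cases i
      · exact ⟨_, by rw [← mul_normalForm_left hx, ← hφx]; rfl⟩
      · exact ⟨_, by rw [← mul_normalForm_right hy, ← hφy]; rfl⟩
    | mul w₁ w₂ h₁ h₂ =>
      intro f
      obtain ⟨f₂, hf₂⟩ := h₂ f
      obtain ⟨f₁, hf₁⟩ := h₁ f₂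
      exact ⟨f₁, by rw [hf₁, hf₂, map_mul, mul_assoc]⟩
    | add w₁ w₂ h₁ h₂ =>
      intro f
      obtain ⟨f₁, hf₁⟩ := h₁ f
      obtain ⟨f₂, hf₂⟩ := h₂ f
      exact ⟨f₁ + f₂, by rw [normalForm_add, hf₁, hf₂, map_add, add_mul]⟩
  obtain ⟨w, rfl⟩ := hφ g
  obtain ⟨f, hf⟩ := key w ![1, 0, 0, 0]
  exact ⟨f, by rw [hf]; simp [normalForm]⟩

end NormalForm

/-! ### The dimension count -/

lemma aeval_quadratic {A : Type*} [Ring A] [Algebra ℂ A] (w : A) (t : ℕ → ℂ) :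
    aeval w (∏ k ∈ Finset.Icc 1 2, (X - C (t k)))
      = w * w - ((t 1 + t 2) • w - (t 1 * t 2) • 1) := by
  rw [show Finset.Icc 1 2 = ({1, 2} : Finset ℕ) from rfl, Finset.prod_pair (by decide)]
  simp only [map_mul, map_sub, aeval_X, aeval_C, Algebra.algebraMap_eq_smul_one, mul_sub, sub_mul,
    smul_mul_assoc, mul_smul_comm, one_mul, mul_one]
  module

/-- The representation sends `f₀(z) + f₁(z) a + f₂(z) b + f₃(z) ab` to a matrix whose first column
is the vector of residues of the `fᵢ`. -/
lemma normalForm_mat_col (Q : ℂ[X]) (s p u v : ℂ) (f : Fin 4 → ℂ[X]) (i : Fin 4) :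
    normalForm (matA (algebraMap ℂ (AdjoinRoot Q) s) (algebraMap ℂ (AdjoinRoot Q) p))
      (matB (algebraMap ℂ (AdjoinRoot Q) s) (algebraMap ℂ (AdjoinRoot Q) u)
        (algebraMap ℂ (AdjoinRoot Q) v) (AdjoinRoot.root Q))
      (algebraMap (AdjoinRoot Q) (Matrix (Fin 4) (Fin 4) (AdjoinRoot Q)) (AdjoinRoot.root Q))
      f i 0 = AdjoinRoot.mk Q (f i) := by
  have h : ∀ g : ℂ[X], aeval (algebraMap (AdjoinRoot Q)
      (Matrix (Fin 4) (Fin 4) (AdjoinRoot Q)) (AdjoinRoot.root Q)) g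
      = algebraMap _ _ (AdjoinRoot.mk Q g) := by
    intro g
    rw [aeval_algebraMap_apply, AdjoinRoot.aeval_eq]
  simp only [normalForm, h, ← Algebra.smul_def]
  fin_cases i <;>
    simp [matA, matB, Matrix.algebraMap_matrix_apply]

lemma finrank_aux (Q : ℂ[X]) (hQ : Q.Monic) :
    Module.finrank ℂ (Fin 4 → AdjoinRoot Q) = 4 * Q.natDegree := by
  have : Module.Finite ℂ (AdjoinRoot Q) := (AdjoinRoot.powerBasis' hQ).finite
  have : Module.Free ℂ (AdjoinRoot Q) := inferInstance
  rw [Module.finrank_pi_fintype, (AdjoinRoot.powerBasis' hQ).finrank, AdjoinRoot.powerBasis'_dim]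
  simp

/-- The dimension count, for `n = 2 m`: the first-column map `L` to `(ℂ[X]/Q)⁴` is bijective, being
onto because it sends normal forms to their residues, and injective because `Q(z) = 0`. -/
theorem finrank_Aplus (m : ℕ) (t12 t23 t13 : ℕ → ℂ)
    (hpv : t12 1 * t12 2 * (t23 1 * t23 2) ≠ 0)
    (ht : ∀ i, 1 ≤ i → i ≤ m →
      t12 1 * t12 2 * (t23 1 * t23 2) = t13 i * t13 (2 * m + 1 - i)) :
    Module.finrank ℂ (Aplus 2 2 (2 * m) t12 t23 t13) = 4 * m := by
  set s := t12 1 + t12 2 with hs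
  set p := t12 1 * t12 2 with hp
  set u := t23 1 + t23 2 with hu
  set v := t23 1 * t23 2 with hv
  set Q := pairedPoly m t13 with hQ
  let π := RingQuot.mkAlgHom ℂ (Rel 2 2 (2 * m) t12 t23 t13)
  have hπ : Function.Surjective π := RingQuot.mkAlgHom_surjective ℂ _
  have hx : π a * π a = s • π a - p • 1 := by
    rw [← sub_eq_zero, ← aeval_quadratic, aeval_algHom_apply]
    exact (RingQuot.mkAlgHom_rel ℂ Rel.ra).trans (map_zero _)
  have hy : π b * π b = u • π b - v • 1 := by
    rw [← sub_eq_zero, ← aeval_quadratic, aeval_algHom_apply]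
    exact (RingQuot.mkAlgHom_rel ℂ Rel.rb).trans (map_zero _)
  set z := centralElt (π a) (π b) s u with hz
  have hQz : aeval z Q = 0 := by
    have h : aeval (π a * π b) (∏ k ∈ Finset.Icc 1 (2 * m), (X - C (t13 k))) = 0 := by
      rw [← map_mul, aeval_algHom_apply]
      exact (RingQuot.mkAlgHom_rel ℂ Rel.rab).trans (map_zero _)
    rw [aeval_pairedProd ((centralElt_commute_left hx).mul_right (centralElt_commute_right hy))
      (sq_mul hx hy) m t13 ht] at h
    exact ((isUnit_mul hx hy hpv).pow m).mul_left_eq_zero.1 h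
  let R := AdjoinRoot Q
  let MA : Matrix (Fin 4) (Fin 4) R := matA (algebraMap ℂ R s) (algebraMap ℂ R p)
  let MB : Matrix (Fin 4) (Fin 4) R :=
    matB (algebraMap ℂ R s) (algebraMap ℂ R u) (algebraMap ℂ R v) (AdjoinRoot.root Q)
  have hMA : MA * MA = s • MA - p • 1 := matA_sq s p
  have hMB : MB * MB = u • MB - v • 1 := matB_sq s u v _
  have hMz : centralElt MA MB s u = algebraMap R _ (AdjoinRoot.root Q) := centralElt_mat s p u v _
  let φ : FreeAlgebra ℂ (Fin 2) →ₐ[ℂ] Matrix (Fin 4) (Fin 4) R := FreeAlgebra.lift ℂ ![MA, MB]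
  have hφa : φ a = MA := by simp [φ, a]
  have hφb : φ b = MB := by simp [φ, b]
  have hφ : ∀ ⦃x y⦄, Rel 2 2 (2 * m) t12 t23 t13 x y → φ x = φ y := by
    rintro _ _ (_ | _ | _)
    · rw [← aeval_algHom_apply, hφa, aeval_quadratic, map_zero, sub_eq_zero]; exact hMA
    · rw [← aeval_algHom_apply, hφb, aeval_quadratic, map_zero, sub_eq_zero]; exact hMB
    · rw [← aeval_algHom_apply, map_mul, hφa, hφb, map_zero,
        aeval_pairedProd ((centralElt_commute_left hMA).mul_right (centralElt_commute_right hMB))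
        (sq_mul hMA hMB) m t13 ht, hMz, aeval_algebraMap_apply, AdjoinRoot.aeval_eq,
        AdjoinRoot.mk_self, map_zero, zero_mul]
  let ρ := RingQuot.liftAlgHom ℂ ⟨φ, hφ⟩
  have hρ : ∀ w, ρ (π w) = φ w := fun w => RingQuot.liftAlgHom_mkAlgHom_apply ℂ φ hφ w
  -- The coordinates of an element are the entries of the first column of its matrix.
  let L : Aplus 2 2 (2 * m) t12 t23 t13 →ₗ[ℂ] (Fin 4 → R) :=
    { toFun := fun g i => ρ g i 0
      map_add' := fun g h => by ext i; simp
      map_smul' := fun c g => by ext i; simp }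
  have hL : ∀ f i, L (normalForm (π a) (π b) z f) i = AdjoinRoot.mk Q (f i) := by
    intro f i
    have hρz : ρ z = algebraMap R _ (AdjoinRoot.root Q) := by
      rw [← hMz, hz]
      simp [centralElt, hρ, hφa, hφb]
    have : ρ (normalForm (π a) (π b) z f)
        = normalForm MA MB (algebraMap R _ (AdjoinRoot.root Q)) f := by
      simp only [normalForm, map_add, map_mul, ← aeval_algHom_apply, hρz, hρ, hφa, hφb]
    change ρ _ i 0 = _
    rw [this]
    exact normalForm_mat_col Q s p u v f i
  have hbij : Function.Bijective L := by
    constructor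
    · rw [injective_iff_map_eq_zero]
      intro g hg
      obtain ⟨f, rfl⟩ := exists_normalForm hx hy π hπ rfl rfl g
      have hf : ∀ i, aeval z (f i) = 0 := by
        intro i
        have h0 : AdjoinRoot.mk Q (f i) = 0 := by rw [← hL f i, hg]; rfl
        obtain ⟨c, hc⟩ := AdjoinRoot.mk_eq_zero.1 h0
        rw [hc, map_mul, hQz, zero_mul]
      simp only [normalForm, ← hz, hf, zero_mul, add_zero]
    · intro r
      choose f hf using fun i => AdjoinRoot.mk_surjective (r i)
      exact ⟨normalForm (π a) (π b) z f, funext fun i => (hL f i).trans (hf i)⟩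
  rw [(LinearEquiv.ofBijective L hbij).finrank_eq, finrank_aux Q (pairedPoly_monic m t13), hQ,
    pairedPoly_natDegree]

end Rank3

/-- Lemma 4.2, case `(2,2,n)`, `n ≥ 2` even (spin component). -/
theorem lemma_4_2_22n_even (n : ℕ) (hn2 : 2 ≤ n) (hneven : Even n)
    (t12 t23 t13 : ℕ → ℂ)
    (h12 : ∀ k ∈ Finset.Icc 1 2, t12 k ≠ 0)
    (h23 : ∀ k ∈ Finset.Icc 1 2, t23 k ≠ 0)
    (h13 : ∀ k ∈ Finset.Icc 1 n, t13 k ≠ 0)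
    (e : ∀ i : ℕ, 1 ≤ i → i ≤ n / 2 →
      t12 1 * t12 2 * t23 1 * t23 2 = t13 i * t13 (n + 1 - i)) :
    Module.finrank ℂ (Rank3.Aplus 2 2 n t12 t23 t13) = 2 * n := by
  obtain ⟨m, rfl⟩ := even_iff_exists_two_mul.1 hneven
  have h1 : (1 : ℕ) ∈ Finset.Icc 1 2 := by simp
  have h2 : (2 : ℕ) ∈ Finset.Icc 1 2 := by simp
  rw [Rank3.finrank_Aplus m t12 t23 t13
    (mul_ne_zero (mul_ne_zero (h12 1 h1) (h12 2 h2)) (mul_ne_zero (h23 1 h1) (h23 2 h2)))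
    fun i hi him => by rw [← mul_assoc]; exact e i hi (by omega)]
  ring
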